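/- Let G = A *_C B be an amalgamated free product, fix a nontrivial a ∈ A with CaC ≠ Ca⁻¹C, and let Δ: G → ℝ be defined from a-segments in special forms as Δ(g) = Σ_{k≥1} r_k(g). If p ∈ G is a group-palindrome, then Δ(p) ≤ 3. -/

import Mathlib

/-!
By the normal form theorem, a nonempty alternating product of syllables outside `C` is not in `C`
(`prod_notMem_CG`, deduced from Mathlib's theorem for `Monoid.PushoutI`). Cancelling syllables from
the left, it follows that two alternating products which agree up to elements of `C` at both ends
have the same length, and that their corresponding syllables lie in the same double cosets of `C`
(`Good.forall₂`).

For a group-palindrome `p = x₁ ⋯ xₙ = xₙ ⋯ x₁`, compare the special form of `p` with both of these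
expressions. In the special form the letter `a` stands exactly at the syllables in `C a C`, so the
set of positions of `a` is symmetric under reversal, and likewise for `a⁻¹` (`specialForm_symm`).
Reversal then acts as an involution on the `a`-segments of each length, and a fixed point is a
segment centred at the middle of the word. There is at most one of those over all lengths, since two
would be nested; hence `p_k` is odd for at most one `k`, and so is `m_k` (`even_segCount`). Therefore
`r_k = 1` for at most two values of `k`, which gives `Δ(p) ≤ 2`.
-/

open Monoid

open scoped Classical

namespace PalAmalg

variable {A B C : Type*} [Group A] [Group B] [Group C]
variable (i : C →* A) (j : C →* B)

/-- The free product of `A` and `B` amalgamated over `C` (embedded in `A` via `i` and in `B`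
via `j`): the quotient of the free product `A ∗ B` by the normal subgroup generated by the
elements `i c * (j c)⁻¹`, `c ∈ C`. -/
abbrev Amalg : Type _ :=
  Coprod A B ⧸ Subgroup.normalClosure
    {x : Coprod A B | ∃ c : C, x = Coprod.inl (i c) * (Coprod.inr (j c))⁻¹}

/-- The canonical map of the factor `A` into the amalgam. -/
def ofA : A →* Amalg i j := (QuotientGroup.mk' _).comp Coprod.inl

/-- The canonical map of the factor `B` into the amalgam. -/
def ofB : B →* Amalg i j := (QuotientGroup.mk' _).comp Coprod.inr

/-- The image of the factor `A` in the amalgam. -/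
def AG : Set (Amalg i j) := Set.range (ofA i j)

/-- The image of the factor `B` in the amalgam. -/
def BG : Set (Amalg i j) := Set.range (ofB i j)

/-- The image of the amalgamated subgroup `C` in the amalgam. -/
def CG : Set (Amalg i j) := Set.range ((ofA i j).comp i)

/-- The double coset `C v C` in the amalgam. -/
def DCoset (v : Amalg i j) : Set (Amalg i j) :=
  {x | ∃ c1 ∈ CG i j, ∃ c2 ∈ CG i j, x = c1 * v * c2}

/-- A sequence `x₁, …, xₙ` of elements of the amalgam is reduced if every `xᵢ` lies in one of
the factors, successive `xᵢ, xᵢ₊₁` lie in different factors, no `xᵢ` lies in `C` when `n > 1`,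
and `x₁ ≠ 1` when `n = 1`. -/
def Reduced (l : List (Amalg i j)) : Prop :=
  (∀ x ∈ l, x ∈ AG i j ∪ BG i j) ∧
  List.Chain' (fun x y => ¬(x ∈ AG i j ∧ y ∈ AG i j) ∧ ¬(x ∈ BG i j ∧ y ∈ BG i j)) l ∧
  (1 < l.length → ∀ x ∈ l, x ∉ CG i j) ∧
  (l.length = 1 → ∀ x ∈ l, x ≠ 1)

/-- `g` is a group-palindrome if it has a reduced expression `x₁ ⋯ xₙ` whose reverse
`xₙ ⋯ x₁` represents the same element of the amalgam. -/
def GroupPalindrome (g : Amalg i j) : Prop :=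
  ∃ l : List (Amalg i j), Reduced i j l ∧ l.prod = g ∧ l.reverse.prod = g

/-- A special sequence (with respect to a fixed `a ∈ A`): an alternating sequence of elements
of the factors in which every syllable lying in the double coset `C a C` is the letter `a`
itself, and every syllable lying in `C a⁻¹ C` is the letter `a⁻¹` itself. -/
def IsSpecialSeq (a : A) (l : List (Amalg i j)) : Prop :=
  (∀ x ∈ l, x ∈ AG i j ∪ BG i j) ∧
  List.Chain' (fun x y => ¬(x ∈ AG i j ∧ y ∈ AG i j) ∧ ¬(x ∈ BG i j ∧ y ∈ BG i j)) l ∧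
  (1 < l.length → ∀ x ∈ l, x ∉ CG i j) ∧
  (∀ x ∈ l, x ∈ DCoset i j (ofA i j a) → x = ofA i j a) ∧
  (∀ x ∈ l, x ∈ DCoset i j (ofA i j a)⁻¹ → x = (ofA i j a)⁻¹)

/-- `l` is a special form of `g`: up to boundary elements `u, u'` of `C` (which arise when the
first or last syllable is replaced by `a^{±1}`), the special sequence `l` represents `g`. -/
def IsSpecialForm (a : A) (g : Amalg i j) (l : List (Amalg i j)) : Prop :=
  IsSpecialSeq i j a l ∧ ∃ u ∈ CG i j, ∃ u' ∈ CG i j, u * l.prod * u' = g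

/-- A chosen special form of `g`. -/
noncomputable def spform (a : A) (g : Amalg i j) : List (Amalg i j) :=
  if h : ∃ l : List (Amalg i j), IsSpecialForm i j a g l then Classical.choose h else []

/-- The number of `v`-segments of length `2k-1` in the list `l`: subwords
`v x₁ ⋯ x_{2k-1} v` with no `x_t = v`. -/
noncomputable def segCount (v : Amalg i j) (k : ℕ) (l : List (Amalg i j)) : ℕ :=
  ((Finset.range (l.length + 1)).filter fun s => ∃ l₁ m l₂ : List (Amalg i j),
    l = l₁ ++ [v] ++ m ++ [v] ++ l₂ ∧ l₁.length = s ∧ m.length = 2 * k - 1 ∧ v ∉ m).card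

/-- `p_k(g)`: the number of `a`-segments of length `2k-1` in the special form of `g`. -/
noncomputable def pk (a : A) (k : ℕ) (g : Amalg i j) : ℕ :=
  segCount i j (ofA i j a) k (spform i j a g)

/-- `m_k(g)`: the number of `a⁻¹`-segments of length `2k-1` in the special form of `g`. -/
noncomputable def mk (a : A) (k : ℕ) (g : Amalg i j) : ℕ :=
  segCount i j (ofA i j a)⁻¹ k (spform i j a g)

/-- `d_k = p_k - m_k`. -/
noncomputable def dk (a : A) (k : ℕ) (g : Amalg i j) : ℤ :=
  (pk i j a k g : ℤ) - (mk i j a k g : ℤ)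

/-- `r_k ∈ {0,1}`: the remainder of `d_k` modulo 2. -/
noncomputable def rk (a : A) (k : ℕ) (g : Amalg i j) : ℤ := dk i j a k g % 2

/-- The quasi-homomorphism `Δ(g) = Σ_{k ≥ 1} r_k(g)` (a finite sum, since `r_k = 0` for `k`
larger than the length of the special form). -/
noncomputable def Delta (a : A) (g : Amalg i j) : ℝ :=
  ∑ k ∈ Finset.Icc 1 (spform i j a g).length, (rk i j a k g : ℝ)

/-! ### The normal form theorem for the amalgam -/

section NormalForm

universe u v

/-- The two factors as a family indexed by `Bool`, lifted to a common universe so that Mathlib's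
`Monoid.PushoutI` applies: `true` stands for `A` and `false` for `B`. -/
def Fac (A : Type u) (B : Type v) : Bool → Type (max u v)
  | true => ULift.{v} A
  | false => ULift.{u} B

instance facGroup (A : Type u) (B : Type v) [Group A] [Group B] : ∀ b, Group (Fac A B b)
  | true => inferInstanceAs (Group (ULift.{v} A))
  | false => inferInstanceAs (Group (ULift.{u} B))

/-- `A` as the factor with index `true`. -/
def liftA (A : Type u) (B : Type v) [Group A] [Group B] : A →* Fac A B true :=
  (MulEquiv.ulift.symm : A ≃* ULift.{v} A).toMonoidHom

/-- `B` as the factor with index `false`. -/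
def liftB (A : Type u) (B : Type v) [Group A] [Group B] : B →* Fac A B false :=
  (MulEquiv.ulift.symm : B ≃* ULift.{u} B).toMonoidHom

theorem liftA_injective (A : Type u) (B : Type v) [Group A] [Group B] :
    Function.Injective (liftA A B) :=
  (MulEquiv.ulift.symm : A ≃* ULift.{v} A).injective

theorem liftB_injective (A : Type u) (B : Type v) [Group A] [Group B] :
    Function.Injective (liftB A B) :=
  (MulEquiv.ulift.symm : B ≃* ULift.{u} B).injective

/-- The two embeddings of the amalgamated subgroup as a family indexed by `Bool`. -/
def facMap {A : Type u} {B : Type v} {C : Type*} [Group A] [Group B] [Group C]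
    (i : C →* A) (j : C →* B) : ∀ b, C →* Fac A B b
  | true => (liftA A B).comp i
  | false => (liftB A B).comp j

theorem facMap_injective (hi : Function.Injective i) (hj : Function.Injective j) :
    ∀ b, Function.Injective (facMap i j b)
  | true => (liftA_injective A B).comp hi
  | false => (liftB_injective A B).comp hj

/-- The comparison map from the amalgam to Mathlib's pushout. -/
noncomputable def toPush : Amalg i j →* PushoutI (facMap i j) :=
  QuotientGroup.lift _
    (Coprod.lift ((PushoutI.of (φ := facMap i j) true).comp (liftA A B))
      ((PushoutI.of (φ := facMap i j) false).comp (liftB A B))) (by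
    refine Subgroup.normalClosure_le_normal ?_
    rintro _ ⟨c, rfl⟩
    have h₁ := PushoutI.of_apply_eq_base (facMap i j) true c
    have h₂ := PushoutI.of_apply_eq_base (facMap i j) false c
    simp only [facMap, MonoidHom.comp_apply] at h₁ h₂
    simp [MonoidHom.mem_ker, h₁, h₂])

theorem toPush_ofA (s : A) :
    toPush i j (ofA i j s) = PushoutI.of (φ := facMap i j) true (liftA A B s) := by
  simp [toPush, ofA]

theorem toPush_ofB (s : B) :
    toPush i j (ofB i j s) = PushoutI.of (φ := facMap i j) false (liftB A B s) := by
  simp [toPush, ofB]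

theorem toPush_ofA_base (c : C) :
    toPush i j (ofA i j (i c)) = PushoutI.base (facMap i j) c := by
  rw [toPush_ofA]
  exact PushoutI.of_apply_eq_base (facMap i j) true c

theorem ofA_eq_ofB (c : C) : ofA i j (i c) = ofB i j (j c) := by
  refine QuotientGroup.eq_iff_div_mem.2 ?_
  rw [div_eq_mul_inv]
  exact Subgroup.subset_normalClosure ⟨c, rfl⟩

/-- Every syllable of the amalgam comes from an element of a factor that contains it, and this
element is in the image of `C` only if the syllable is in `C`. -/
theorem exists_tag (x : Amalg i j) (hx : x ∈ AG i j ∪ BG i j) :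
    ∃ d : Σ b, Fac A B b, PushoutI.of (φ := facMap i j) d.1 d.2 = toPush i j x ∧
      ((d.1 = true ∧ x ∈ AG i j) ∨ (d.1 = false ∧ x ∈ BG i j)) ∧
      (d.2 ∈ (facMap i j d.1).range → x ∈ CG i j) := by
  rcases hx with ⟨s, rfl⟩ | ⟨s, rfl⟩
  · refine ⟨⟨true, liftA A B s⟩, (toPush_ofA i j s).symm, Or.inl ⟨rfl, s, rfl⟩, ?_⟩
    rintro ⟨c, hc⟩
    exact ⟨c, congrArg (ofA i j) (liftA_injective A B hc)⟩
  · refine ⟨⟨false, liftB A B s⟩, (toPush_ofB i j s).symm, Or.inr ⟨rfl, s, rfl⟩, ?_⟩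
    rintro ⟨c, hc⟩
    exact ⟨c, (ofA_eq_ofB i j c).trans (congrArg (ofB i j) (liftB_injective A B hc))⟩

theorem mem_CG_of_mem_AG_of_mem_BG (hi : Function.Injective i) (hj : Function.Injective j)
    {x : Amalg i j} (hA : x ∈ AG i j) (hB : x ∈ BG i j) : x ∈ CG i j := by
  obtain ⟨s, rfl⟩ := hA
  obtain ⟨t, ht⟩ := hB
  have hinf := PushoutI.inf_of_range_eq_base_range (φ := facMap i j)
    (facMap_injective i j hi hj) (i := true) (j := false) (by simp)
  have hmem : toPush i j (ofA i j s) ∈ (PushoutI.base (facMap i j)).range := by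
    rw [← hinf]
    exact ⟨⟨_, (toPush_ofA i j s).symm⟩, ⟨_, (toPush_ofB i j t).symm.trans (by rw [ht])⟩⟩
  obtain ⟨c, hc⟩ := hmem
  rw [← toPush_ofA_base, toPush_ofA, toPush_ofA] at hc
  have := liftA_injective A B (PushoutI.of_injective (facMap_injective i j hi hj) true hc)
  exact ⟨c, congrArg (ofA i j) this⟩

/-- The normal form theorem: a nonempty alternating product of syllables outside `C` is not
in `C`. -/
theorem prod_notMem_CG (hi : Function.Injective i) (hj : Function.Injective j)
    {l : List (Amalg i j)} (hne : l ≠ [])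
    (hl : ∀ x ∈ l, x ∈ AG i j ∪ BG i j) (hC : ∀ x ∈ l, x ∉ CG i j)
    (hch : l.IsChain
      (fun x y => ¬(x ∈ AG i j ∧ y ∈ AG i j) ∧ ¬(x ∈ BG i j ∧ y ∈ BG i j))) :
    l.prod ∉ CG i j := by
  rintro ⟨c, hc⟩
  have : Nonempty (Σ b, Fac A B b) := ⟨⟨true, 1⟩⟩
  choose! tag tag_spec using exists_tag i j
  let w : CoprodI.Word (Fac A B) :=
    { toList := l.map (tag)
      ne_one := by
        intro y hy
        obtain ⟨x, hx, rfl⟩ := List.mem_map.1 hy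
        intro h
        exact hC x hx ((tag_spec x (hl x hx)).2.2 (h ▸ one_mem _))
      chain_ne := by
        rw [List.isChain_map]
        refine (List.isChain_iff_getElem).2 fun n hn => ?_
        have hR := (List.isChain_iff_getElem).1 hch n hn
        have hx := (tag_spec _ (hl _ (List.getElem_mem (Nat.lt_of_succ_lt hn)))).2.1
        have hy := (tag_spec _ (hl _ (List.getElem_mem hn))).2.1
        intro h
        rw [h] at hx
        rcases hx with ⟨h1, h2⟩ | ⟨h1, h2⟩ <;> rcases hy with ⟨h3, h4⟩ | ⟨h3, h4⟩
        · exact hR.1 ⟨h2, h4⟩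
        · simp [h1] at h3
        · simp [h1] at h3
        · exact hR.2 ⟨h2, h4⟩ }
  have hw : PushoutI.Reduced (facMap i j) w := by
    intro y hy
    obtain ⟨x, hx, rfl⟩ := List.mem_map.1 hy
    exact fun h => hC x hx ((tag_spec x (hl x hx)).2.2 h)
  have hprod : PushoutI.ofCoprodI w.prod = toPush i j l.prod := by
    rw [CoprodI.Word.prod, map_list_prod, map_list_prod, List.map_map, List.map_map]
    congr 1
    refine List.map_congr_left fun x hx => ?_
    simpa using (tag_spec x (hl x hx)).1
  have hemp := hw.eq_empty_of_mem_range (facMap_injective i j hi hj)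
    (by rw [hprod, ← hc]; exact ⟨c, (toPush_ofA_base i j c).symm⟩)
  have : l.map (tag) = [] := congrArg CoprodI.Word.toList hemp
  exact hne (List.map_eq_nil_iff.1 this)

end NormalForm

/-! ### Reduced products with the same value -/

section Cosets

variable {Γ : Type*} [Group Γ] (P Q R : Subgroup Γ)

/-- Alternating lists of elements of `P ∪ Q` outside `R`. -/
def Good (l : List Γ) : Prop :=
  (∀ x ∈ l, (x ∈ P ∨ x ∈ Q) ∧ x ∉ R) ∧
    l.IsChain (fun x y => ¬(x ∈ P ∧ y ∈ P) ∧ ¬(x ∈ Q ∧ y ∈ Q))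

variable {P Q R}

theorem Good.tail {x : Γ} {l : List Γ} (h : Good P Q R (x :: l)) : Good P Q R l :=
  ⟨fun y hy => h.1 y (List.mem_cons_of_mem _ hy), h.2.tail⟩

theorem Good.reverse {l : List Γ} (h : Good P Q R l) : Good P Q R l.reverse := by
  refine ⟨fun x hx => h.1 x (List.mem_reverse.1 hx), ?_⟩
  rw [List.isChain_reverse]
  exact h.2.imp fun x y hxy => by tauto

theorem Good.map_inv {l : List Γ} (h : Good P Q R l) : Good P Q R (l.map (·⁻¹)) := by
  refine ⟨?_, ?_⟩
  · intro x hx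
    obtain ⟨y, hy, rfl⟩ := List.mem_map.1 hx
    simpa using h.1 y hy
  · rw [List.isChain_map]
    simpa using h.2

theorem Good.cons {x : Γ} {l : List Γ} (hx : (x ∈ P ∨ x ∈ Q) ∧ x ∉ R) (h : Good P Q R l)
    (hl : ∀ y ∈ l.head?, ¬(x ∈ P ∧ y ∈ P) ∧ ¬(x ∈ Q ∧ y ∈ Q)) : Good P Q R (x :: l) := by
  refine ⟨?_, List.isChain_cons.2 ⟨hl, h.2⟩⟩
  intro y hy
  rcases List.mem_cons.1 hy with rfl | hy
  exacts [hx, h.1 y hy]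

/-- Gluing the inverse of one alternating list to another. -/
theorem Good.join {l l' : List Γ} (h : Good P Q R l) (h' : Good P Q R l')
    (hl : ∀ y ∈ l.head?, ∀ x ∈ l'.head?, ¬(y ∈ P ∧ x ∈ P) ∧ ¬(y ∈ Q ∧ x ∈ Q)) :
    Good P Q R ((l.map (·⁻¹)).reverse ++ l') := by
  refine ⟨?_, List.isChain_append.2 ⟨h.map_inv.reverse.2, h'.2, ?_⟩⟩
  · intro x hx
    rcases List.mem_append.1 hx with hx | hx
    exacts [h.map_inv.reverse.1 x hx, h'.1 x hx]
  · intro y hy x hx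
    rw [List.getLast?_reverse, List.head?_map] at hy
    obtain ⟨z, hz, rfl⟩ := Option.mem_map.1 hy
    simpa using hl z hz x hx

theorem Good.head {x : Γ} {l : List Γ} (h : Good P Q R (x :: l)) :
    ∀ y ∈ l.head?, ¬(x ∈ P ∧ y ∈ P) ∧ ¬(x ∈ Q ∧ y ∈ Q) :=
  (List.isChain_cons.1 h.2).1

/-- Two alternating products that agree up to elements of `R` at both ends have the same length,
and corresponding syllables lie in the same double coset of `R`. If the first syllables
`x`, `y` satisfied `y⁻¹ c x ∉ R`, then `l'⁻¹ c l` would be an alternating product outside `R`;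
so `y⁻¹ c x ∈ R` and the first syllables can be cancelled. -/
theorem Good.forall₂ (hRP : R ≤ P) (hRQ : R ≤ Q) (hPQ : P ⊓ Q ≤ R)
    (core : ∀ l, Good P Q R l → l ≠ [] → l.prod ∉ R) :
    ∀ l l' : List Γ, Good P Q R l → Good P Q R l' → ∀ c ∈ R, ∀ c' ∈ R,
      l'.prod * c' = c * l.prod →
      List.Forall₂ (fun x y => ∃ c1 ∈ R, ∃ c2 ∈ R, y = c1 * x * c2) l l'
  | [], [], _, _, _, _, _, _, _ => List.Forall₂.nil
  | [], y :: l', _, h', c, hc, c', hc', e => by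
    refine absurd ?_ (core _ h' (by simp))
    rw [eq_mul_inv_of_mul_eq e]
    simpa using mul_mem hc (inv_mem hc')
  | x :: l, [], h, _, c, hc, c', hc', e => by
    refine absurd ?_ (core _ h (by simp))
    rw [← inv_mul_eq_of_eq_mul e]
    simpa using mul_mem (inv_mem hc) hc'
  | x :: l, y :: l', h, h', c, hc, c', hc', e => by
    have hx := h.1 x (by simp)
    have hy := h'.1 y (by simp)
    have hcx : (c * x ∈ P ↔ x ∈ P) ∧ (c * x ∈ Q ↔ x ∈ Q) ∧ (c * x ∈ R ↔ x ∈ R) :=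
      ⟨P.mul_mem_cancel_left (hRP hc), Q.mul_mem_cancel_left (hRQ hc), R.mul_mem_cancel_left hc⟩
    have hexcl : ∀ z, z ∉ R → z ∈ P → z ∉ Q := fun z hz h1 h2 => hz (hPQ ⟨h1, h2⟩)
    have e' : (l'.prod)⁻¹ * (y⁻¹ * (c * x)) * l.prod = c' := by
      simp only [List.prod_cons] at e
      have : c' = (y * l'.prod)⁻¹ * (c * (x * l.prod)) := by rw [← e]; group
      rw [this]; group
    have hmem : y⁻¹ * (c * x) ∈ R := by
      by_contra hz
      by_cases hsame : (y ∈ P ∧ x ∈ P) ∨ (y ∈ Q ∧ x ∈ Q)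
      ·
        -- the syllables `y⁻¹` and `c * x` merge to one syllable outside `R`
        have hzmem : (y ∈ P ∧ x ∈ P ∧ y⁻¹ * (c * x) ∈ P) ∨
            (y ∈ Q ∧ x ∈ Q ∧ y⁻¹ * (c * x) ∈ Q) := by
          rcases hsame with ⟨h1, h2⟩ | ⟨h1, h2⟩
          · exact Or.inl ⟨h1, h2, mul_mem (inv_mem h1) (hcx.1.2 h2)⟩
          · exact Or.inr ⟨h1, h2, mul_mem (inv_mem h1) (hcx.2.1.2 h2)⟩
        have hg : Good P Q R ((y⁻¹ * (c * x)) :: l) :=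
          Good.cons ⟨hzmem.imp (·.2.2) (·.2.2), hz⟩ h.tail fun t ht => by
            rcases hzmem with ⟨-, hxP, hzP⟩ | ⟨-, hxQ, hzQ⟩
            · exact ⟨fun k => (h.head t ht).1 ⟨hxP, k.2⟩, fun k => hexcl _ hz hzP k.1⟩
            · exact ⟨fun k => hexcl _ hz k.1 hzQ, fun k => (h.head t ht).2 ⟨hxQ, k.2⟩⟩
        have hg' := Good.join h'.tail hg fun t ht s hs => by
          obtain rfl : _ = s := by simpa using hs
          rcases hzmem with ⟨hyP, -, hzP⟩ | ⟨hyQ, -, hzQ⟩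
          · exact ⟨fun k => (h'.head t ht).1 ⟨hyP, k.1⟩, fun k => hexcl _ hz hzP k.2⟩
          · exact ⟨fun k => hexcl _ hz k.2 hzQ, fun k => (h'.head t ht).2 ⟨hyQ, k.1⟩⟩
        refine core _ hg' (by simp) ?_
        rw [List.prod_append, ← List.prod_inv_reverse, List.prod_cons, ← mul_assoc, e']
        exact hc'
      · have hg : Good P Q R ((c * x) :: l) :=
          Good.cons (by rwa [hcx.1, hcx.2.1, hcx.2.2]) h.tail fun t ht => by
            rw [hcx.1, hcx.2.1]
            exact h.head t ht
        have hg' := Good.join h' hg fun t ht s hs => by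
          obtain rfl : _ = s := by simpa using hs
          obtain rfl : _ = t := by simpa using ht
          rw [hcx.1, hcx.2.1]
          exact not_or.1 hsame
        refine core _ hg' (by simp) ?_
        rw [List.prod_append, ← List.prod_inv_reverse, List.prod_cons, List.prod_cons]
        convert hc' using 1
        rw [← e']; group
    refine List.Forall₂.cons ⟨c, hc, _, inv_mem hmem, by group⟩ ?_
    refine Good.forall₂ hRP hRQ hPQ core l l' h.tail h'.tail _ hmem c' hc' ?_
    rw [← e']; group

end Cosets

/-! ### Segments of lists with a palindromic pattern -/

section Segments

theorem mem_segments_iff {α : Type*} (v : α) {k : ℕ} (hk : 1 ≤ k) (l : List α) (s : ℕ) :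
    (∃ l₁ m l₂ : List α, l = l₁ ++ [v] ++ m ++ [v] ++ l₂ ∧ l₁.length = s ∧
      m.length = 2 * k - 1 ∧ v ∉ m) ↔
    l[s]? = some v ∧ l[s + 2 * k]? = some v ∧
      ∀ t, s < t → t < s + 2 * k → l[t]? ≠ some v := by
  constructor
  · rintro ⟨l₁, m, l₂, rfl, rfl, hm, hv⟩
    refine ⟨by simp, ?_, ?_⟩
    · rw [List.getElem?_append_left (by simp; omega), List.getElem?_append_right (by simp; omega)]
      simp only [List.length_append, List.length_singleton, hm]
      rw [show l₁.length + 2 * k - (l₁.length + 1 + (2 * k - 1)) = 0 by omega]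
      rfl
    · intro t h1 h2
      rw [List.getElem?_append_left (by simp; omega), List.getElem?_append_left (by simp; omega),
        List.getElem?_append_right (by simp; omega)]
      exact fun h => hv (List.mem_of_getElem? h)
  · rintro ⟨h1, h2, h3⟩
    obtain ⟨hs, e1⟩ := List.getElem?_eq_some_iff.1 h1
    obtain ⟨hs', e2⟩ := List.getElem?_eq_some_iff.1 h2
    refine ⟨l.take s, (l.drop (s + 1)).take (2 * k - 1), l.drop (s + 2 * k + 1), ?_,
      by simp; omega, by simp; omega, ?_⟩
    · have e3 : l.drop s = v :: l.drop (s + 1) := by rw [List.drop_eq_getElem_cons hs, e1]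
      have e4 : l.drop (s + 2 * k) = v :: l.drop (s + 2 * k + 1) := by
        rw [List.drop_eq_getElem_cons hs', e2]
      have e5 : (l.drop (s + 1)).drop (2 * k - 1) = l.drop (s + 2 * k) := by
        rw [List.drop_drop]; congr 1; omega
      calc l = l.take s ++ l.drop s := (List.take_append_drop s l).symm
        _ = l.take s ++ (v :: ((l.drop (s + 1)).take (2 * k - 1) ++
              (l.drop (s + 1)).drop (2 * k - 1))) := by
            rw [List.take_append_drop (2 * k - 1), e3]
        _ = _ := by rw [e5, e4]; simp
    · intro hv
      obtain ⟨n, hn⟩ := List.mem_iff_getElem?.1 hv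
      have hlt : n < 2 * k - 1 := by
        by_contra h
        simp [h] at hn
      rw [List.getElem?_take_of_lt hlt, List.getElem?_drop] at hn
      exact h3 (s + 1 + n) (by omega) (by omega) hn

/-- A finite set with a fixed-point-free involution has an even number of elements. -/
theorem even_card_of_involution {α : Type*} (S : Finset α) (f : α → α)
    (hf : ∀ s ∈ S, f s ∈ S) (hff : ∀ s ∈ S, f (f s) = s) (hne : ∀ s ∈ S, f s ≠ s) :
    Even S.card := by
  have h : ∑ _s ∈ S, (1 : ZMod 2) = 0 :=
    Finset.sum_involution (fun s _ => f s) (fun _ _ => by decide) (fun s hs _ => hne s hs)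
      hf hff
  rw [Finset.sum_const, nsmul_one] at h
  exact (ZMod.natCast_eq_zero_iff_even).1 h

/-- If the positions of `v` in `l` are symmetric under reversal, then reversal pairs up the
`v`-segments of each length, except for a segment placed symmetrically about the middle of `l`.
Two such central segments would be nested, so there is at most one of them, and the number of
segments is even for all lengths but one. -/
theorem even_segCount (v : Amalg i j) (l : List (Amalg i j))
    (hpal : ∀ t, t < l.length → (l[t]? = some v ↔ l[l.length - 1 - t]? = some v)) :
    ∃ K, ∀ k, 1 ≤ k → k ≠ K → Even (segCount i j v k l) := by
  -- a central segment of length `2 * k - 1` starting at `s`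
  let Cen : ℕ → Prop := fun k => ∃ s, 2 * s + 2 * k + 1 = l.length ∧ l[s]? = some v ∧
    l[s + 2 * k]? = some v ∧ ∀ t, s < t → t < s + 2 * k → l[t]? ≠ some v
  have hev : ∀ k, 1 ≤ k → ¬ Cen k → Even (segCount i j v k l) := by
    intro k hk hcen
    have hmem : ∀ s, s ∈ ((Finset.range (l.length + 1)).filter fun s =>
        ∃ l₁ m l₂ : List (Amalg i j), l = l₁ ++ [v] ++ m ++ [v] ++ l₂ ∧ l₁.length = s ∧
          m.length = 2 * k - 1 ∧ v ∉ m) ↔ (s + 2 * k < l.length ∧ l[s]? = some v ∧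
        l[s + 2 * k]? = some v ∧ ∀ t, s < t → t < s + 2 * k → l[t]? ≠ some v) := by
      intro s
      rw [Finset.mem_filter, mem_segments_iff v hk l s, Finset.mem_range]
      constructor
      · rintro ⟨-, h⟩
        exact ⟨(List.getElem?_eq_some_iff.1 h.2.1).1, h⟩
      · rintro ⟨h1, h⟩
        exact ⟨by omega, h⟩
    refine even_card_of_involution _ (fun s => l.length - 1 - (s + 2 * k)) ?_ ?_ ?_
    · intro s hs
      obtain ⟨h0, h1, h2, h3⟩ := (hmem s).1 hs
      refine (hmem _).2 ⟨by omega, (hpal _ h0).1 h2, ?_, ?_⟩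
      · rw [show l.length - 1 - (s + 2 * k) + 2 * k = l.length - 1 - s by omega]
        exact (hpal s (by omega)).1 h1
      · intro t ht1 ht2 ht
        exact h3 (l.length - 1 - t) (by omega) (by omega) ((hpal t (by omega)).1 ht)
    · intro s hs
      obtain ⟨h0, -⟩ := (hmem s).1 hs
      show l.length - 1 - (l.length - 1 - (s + 2 * k) + 2 * k) = s
      omega
    · intro s hs h
      obtain ⟨h0, h⟩ := (hmem s).1 hs
      exact hcen ⟨s, by omega, h⟩
  by_cases hex : ∃ K, Cen K
  · obtain ⟨K, S, hS, a1, a2, a3⟩ := hex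
    refine ⟨K, fun k hk hne => hev k hk ?_⟩
    rintro ⟨s, hs, b1, b2, b3⟩
    rcases Nat.lt_or_gt_of_ne hne with h | h
    · exact a3 s (by omega) (by omega) b1
    · exact b3 S (by omega) (by omega) a1
  · exact ⟨0, fun k hk _ => hev k hk fun h => hex ⟨k, h⟩⟩

/-- If `v` is the only member of `D` that may occur in `l`, and the positions of members of `D` in
`l` are the same as in `l₀` and as in the reverse of `l₀`, then the positions of `v` in `l` are
symmetric. -/
theorem pattern_symm {α : Type*} (D : Set α) (v : α) {l l₀ : List α} (hv : v ∈ D)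
    (hD : ∀ x ∈ l, x ∈ D → x = v)
    (h₁ : List.Forall₂ (fun x y => x ∈ D ↔ y ∈ D) l l₀)
    (h₂ : List.Forall₂ (fun x y => x ∈ D ↔ y ∈ D) l l₀.reverse) :
    ∀ t, t < l.length → (l[t]? = some v ↔ l[l.length - 1 - t]? = some v) := by
  intro t ht
  have hlen : l.length = l₀.length := h₁.length_eq
  have hv' : ∀ n (hn : n < l.length), l[n]? = some v ↔ l[n] ∈ D := by
    intro n hn
    rw [List.getElem?_eq_getElem hn, Option.some_inj]
    exact ⟨fun h => h ▸ hv, hD _ (List.getElem_mem hn)⟩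
  rw [hv' t ht, hv' _ (by omega)]
  have e₂ := (List.forall₂_iff_get.1 h₂).2 t ht (by simp; omega)
  have e₁ := (List.forall₂_iff_get.1 h₁).2 (l.length - 1 - t) (by omega) (by omega)
  simp only [List.get_eq_getElem, List.getElem_reverse] at e₁ e₂
  rw [e₂, e₁]
  simp only [hlen]

end Segments

/-! ### The special form of a group-palindrome -/

/-- Two lists `l` and `l₀` with the same product up to elements of `C` at both ends meet the double
coset `C v C` at the same positions, if `l` is nonempty and alternating outside `C` and `l₀` is
alternating outside `C` or has product in `C`; this exception allows reduced expressions consisting of one syllable in `C`. -/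
theorem special_matches (hi : Function.Injective i) (hj : Function.Injective j)
    {l l₀ : List (Amalg i j)} (hne : l ≠ [])
    (hl : Good (ofA i j).range (ofB i j).range ((ofA i j).comp i).range l)
    (hl₀ : Good (ofA i j).range (ofB i j).range ((ofA i j).comp i).range l₀ ∨
      l₀.prod ∈ ((ofA i j).comp i).range)
    {c c' : Amalg i j} (hc : c ∈ CG i j) (hc' : c' ∈ CG i j) (e : c * l.prod * c' = l₀.prod)
    (v : Amalg i j) :
    List.Forall₂ (fun x y => x ∈ DCoset i j v ↔ y ∈ DCoset i j v) l l₀ := by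
  have core : ∀ l, Good (ofA i j).range (ofB i j).range ((ofA i j).comp i).range l → l ≠ [] →
      l.prod ∉ ((ofA i j).comp i).range := fun l hl hne =>
    prod_notMem_CG i j hi hj hne (fun x hx => (hl.1 x hx).1) (fun x hx => (hl.1 x hx).2) hl.2
  have hc₁ : c ∈ ((ofA i j).comp i).range := hc
  have hcRight : c' ∈ ((ofA i j).comp i).range := hc'
  rcases hl₀ with hl₀ | hl₀
  · have := Good.forall₂ (P := (ofA i j).range) (Q := (ofB i j).range)
      (R := ((ofA i j).comp i).range)
      (by rintro _ ⟨c, rfl⟩; exact ⟨i c, rfl⟩)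
      (by rintro _ ⟨c, rfl⟩; exact ⟨j c, (ofA_eq_ofB i j c).symm⟩)
      (fun x hx => mem_CG_of_mem_AG_of_mem_BG i j hi hj hx.1 hx.2)
      core l l₀ hl hl₀ c hc₁ c'⁻¹ (inv_mem hcRight) (by rw [← e]; group)
    refine this.imp ?_
    rintro x y ⟨c1, hc1, c2, hc2, rfl⟩
    constructor
    · rintro ⟨d1, hd1, d2, hd2, rfl⟩
      exact ⟨c1 * d1, mul_mem hc1 hd1, d2 * c2, mul_mem hd2 hc2, by group⟩
    · rintro ⟨d1, hd1, d2, hd2, h⟩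
      refine ⟨c1⁻¹ * d1, mul_mem (inv_mem hc1) hd1, d2 * c2⁻¹, mul_mem hd2 (inv_mem hc2), ?_⟩
      have : x = c1⁻¹ * (c1 * x * c2) * c2⁻¹ := by group
      rw [this, h]; group
  · refine absurd ?_ (core l hl hne)
    have : l.prod = c⁻¹ * l₀.prod * c'⁻¹ := by rw [← e]; group
    rw [this]
    exact mul_mem (mul_mem (inv_mem hc₁) hl₀) (inv_mem hcRight)

/-- In a special form of a group-palindrome, the positions of a letter `v` that is
the only syllable in `C v C` (such as `a` and `a⁻¹`) are symmetric under reversal. -/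
theorem specialForm_symm (hi : Function.Injective i) (hj : Function.Injective j) {a : A}
    {p : Amalg i j} (hp : GroupPalindrome i j p) {l : List (Amalg i j)}
    (hl : IsSpecialForm i j a p l) (hlen : 1 < l.length) (v : Amalg i j)
    (hv : ∀ x ∈ l, x ∈ DCoset i j v → x = v) :
    ∀ t, t < l.length → (l[t]? = some v ↔ l[l.length - 1 - t]? = some v) := by
  obtain ⟨⟨h1, h2, h3, -⟩, u, hu, u', hu', e⟩ := hl
  obtain ⟨l₀, ⟨r1, r2, r3, -⟩, e₁, e₂⟩ := hp
  have hgood : Good (ofA i j).range (ofB i j).range ((ofA i j).comp i).range l :=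
    ⟨fun x hx => ⟨h1 x hx, h3 hlen x hx⟩, h2⟩
  have hne : l ≠ [] := by rintro rfl; simp at hlen
  have hone : (1 : Amalg i j) ∈ CG i j := one_mem ((ofA i j).comp i).range
  have hgood₀ : Good (ofA i j).range (ofB i j).range ((ofA i j).comp i).range l₀ ∨
      l₀.prod ∈ ((ofA i j).comp i).range := by
    by_cases h : l₀.prod ∈ ((ofA i j).comp i).range
    · exact Or.inr h
    · refine Or.inl ⟨fun x hx => ⟨r1 x hx, ?_⟩, r2⟩
      match l₀, hx with
      | [y], hx =>
        obtain rfl : x = y := by simpa using hx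
        simpa using h
      | y :: z :: m, hx => exact r3 (by simp) x hx
  refine pattern_symm (DCoset i j v) v ⟨1, hone, 1, hone, by simp⟩ hv
    (special_matches i j hi hj hne hgood hgood₀ hu hu' (e.trans e₁.symm) v)
    (special_matches i j hi hj hne hgood ?_ hu hu' (e.trans e₂.symm) v)
  rcases hgood₀ with h | h
  · exact Or.inl h.reverse
  · exact Or.inr (by rwa [e₂, ← e₁])

/-- If `p` is a group-palindrome in the amalgamated free product, then `Δ(p) ≤ 3` (for `Δ`
defined with respect to a fixed nontrivial `a ∈ A` with `C a C ≠ C a⁻¹ C`). -/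
theorem amalgam_delta_of_group_palindrome
    (hi : Function.Injective i) (hj : Function.Injective j)
    (a : A) (ha : a ≠ 1)
    (hcoset : DCoset i j (ofA i j a) ≠ DCoset i j ((ofA i j a)⁻¹))
    (p : Amalg i j) (hp : GroupPalindrome i j p) :
    Delta i j a p ≤ 3 := by
  unfold Delta
  by_cases hlen : 1 < (spform i j a p).length
  · have hex : ∃ l, IsSpecialForm i j a p l := by
      by_contra h
      simp [spform, h] at hlen
    have hl : IsSpecialForm i j a p (spform i j a p) := by
      rw [spform, dif_pos hex]
      exact Classical.choose_spec hex
    obtain ⟨K₁, h₁⟩ := even_segCount i j (ofA i j a) (spform i j a p)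
      (specialForm_symm i j hi hj hp hl hlen _ hl.1.2.2.2.1)
    obtain ⟨K₂, h₂⟩ := even_segCount i j (ofA i j a)⁻¹ (spform i j a p)
      (specialForm_symm i j hi hj hp hl hlen _ hl.1.2.2.2.2)
    have hr : ∀ k ∈ Finset.Icc 1 (spform i j a p).length,
        (rk i j a k p : ℝ) ≤ (if k = K₁ then 1 else 0) + (if k = K₂ then 1 else 0) := by
      intro k hk
      have hk1 := (Finset.mem_Icc.1 hk).1
      have key : rk i j a k p ≤ (if k = K₁ then 1 else 0) + (if k = K₂ then 1 else 0) := by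
        unfold rk dk pk mk
        by_cases e₁ : k = K₁
        · rw [if_pos e₁]
          split_ifs <;> omega
        · by_cases e₂ : k = K₂
          · rw [if_pos e₂, if_neg e₁]
            omega
          · obtain ⟨m, hm⟩ := h₁ k hk1 e₁
            obtain ⟨n, hn⟩ := h₂ k hk1 e₂
            rw [if_neg e₁, if_neg e₂, hm, hn]
            omega
      exact_mod_cast key
    refine (Finset.sum_le_sum hr).trans ?_
    rw [Finset.sum_add_distrib, Finset.sum_ite_eq', Finset.sum_ite_eq']
    split_ifs <;> norm_num
  ·
    -- a list with at most one syllable has no segments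
    have hseg : ∀ (v : Amalg i j) (k : ℕ), segCount i j v k (spform i j a p) = 0 := by
      intro v k
      rw [segCount, Finset.card_eq_zero, Finset.filter_eq_empty_iff]
      rintro s - ⟨l₁, m, l₂, h, -⟩
      rw [h] at hlen
      simp at hlen
      omega
    rw [Finset.sum_eq_zero]
    · norm_num
    · intro k _
      simp [rk, dk, pk, mk, hseg]

end PalAmalg
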